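/- Let P = G(σ,η,k) be the EGG distribution on ℝ^d and f*(t) = 1{‖t‖₂ ≤ T}. Then for δ = (ρ,0,…,0), E_{z~P}[f*(δ+z)] = E_{u~Gamma((d-2k)/η,1)} Ψ_{(d-1)/2}((T² - (σ_g(2u)^{1/η} - ρ)²)/(4ρσ_g(2u)^{1/η})). -/

import Mathlib

open MeasureTheory ProbabilityTheory

/-- The density of the Exponential General Gaussian distribution `G(σ,η,k)` on `ℝ^d`. -/
noncomputable def eggPDF (d k : ℕ) (η σg : ℝ) (x : EuclideanSpace ℝ (Fin d)) : ℝ :=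
  (η / 2) * (2 * σg ^ η) ^ (-(((d : ℝ) - 2 * k) / η)) * Real.pi ^ (-(d : ℝ) / 2) *
    (Real.Gamma ((d : ℝ) / 2) / Real.Gamma (((d : ℝ) - 2 * k) / η)) *
    ‖x‖ ^ (-(2 * (k : ℝ))) * Real.exp (-(1 / 2) * (‖x‖ / σg) ^ η)

/-- The CDF of the symmetric Beta(a,a) distribution, extended by `0` below `0` and `1`
above `1`. -/
noncomputable def betaCDF (a t : ℝ) : ℝ :=
  (Real.Gamma (2 * a) / (Real.Gamma a) ^ 2) *
    ∫ s in (0 : ℝ)..(min 1 (max 0 t)), s ^ (a - 1) * (1 - s) ^ (a - 1)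

/-!
Conditionally on `‖z‖ = r`, a rotation-invariant `z` makes with a fixed direction `e` an angle `θ`
for which `t = (1 + cos θ) / 2` has law Beta((d-1)/2, (d-1)/2): slicing `ℝ^d` orthogonally to `e`
weights the point `x = r * (2 * t - 1)` of the axis by `(r² - x²)^((d-3)/2)`. The constant in front
of this weight need not be evaluated, since it is the same for a function of `(⟪e, z⟫, ‖z‖)` and
for its Beta average, which depends on `‖z‖` only. Expanding `‖δ + z‖²` turns `‖δ + z‖ ≤ T` into an
upper bound on `t`, whose conditional probability is thus a value of the Beta CDF; it remains to
average over `‖z‖`, which has the law of `σ * (2 * u)^(1/η)` with `u` Gamma-distributed.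
-/

section

open Set Module
open scoped ENNReal RealInnerProductSpace

lemma lintegral_betaMeasure (a b : ℝ) {f : ℝ → ℝ≥0∞} (hf : Measurable f) :
    ∫⁻ t, f t ∂betaMeasure a b =
      ∫⁻ t in Ioo 0 1,
        ENNReal.ofReal (1 / beta a b * t ^ (a - 1) * (1 - t) ^ (b - 1)) * f t := by
  have hpdf : Measurable (betaPDF a b) := (measurable_betaPDFReal a b).ennreal_ofReal
  rw [betaMeasure, lintegral_withDensity_eq_lintegral_mul _ hpdf hf,
    ← lintegral_indicator measurableSet_Ioo]
  congr with t
  by_cases ht : 0 < t ∧ t < 1 <;> simp [betaPDF_eq, indicator, ht]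

lemma lintegral_gammaMeasure (a r : ℝ) {f : ℝ → ℝ≥0∞} (hf : Measurable f) :
    ∫⁻ u, f u ∂gammaMeasure a r = ∫⁻ u in Ioi 0, gammaPDF a r u * f u := by
  have hpdf : Measurable (gammaPDF a r) := (measurable_gammaPDFReal a r).ennreal_ofReal
  rw [gammaMeasure, lintegral_withDensity_eq_lintegral_mul _ hpdf hf,
    setLIntegral_congr Ioi_ae_eq_Ici, ← lintegral_indicator measurableSet_Ici]
  congr with u
  by_cases hu : 0 ≤ u <;> simp [gammaPDF_eq, indicator, hu]

lemma betaCDF_eq_cdf {a : ℝ} (ha : 0 < a) : betaCDF a = cdf (betaMeasure a a) := by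
  ext t
  have := isProbabilityMeasureBeta ha ha
  have hpdf : betaPDFReal a a =
      (Ioo 0 1).indicator fun s ↦ 1 / beta a a * (s ^ (a - 1) * (1 - s) ^ (a - 1)) := by
    ext s
    simp [betaPDFReal, indicator, mul_assoc]
  have hnonneg : 0 ≤ᵐ[volume.restrict (Iic t)] betaPDFReal a a := by
    refine .of_forall fun s ↦ ?_
    by_cases hs : 0 < s ∧ s < 1
    · exact (betaPDFReal_pos hs.1 hs.2 ha ha).le
    · simp [betaPDFReal, hs]
  have hclip : Iic t ∩ Ioc 0 1 = Ioc 0 (min 1 (max 0 t)) := by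
    ext s
    simp only [mem_inter_iff, mem_Iic, mem_Ioc, le_min_iff, le_max_iff]
    grind
  calc betaCDF a t
      = ∫ s in Ioc 0 (min 1 (max 0 t)), 1 / beta a a * (s ^ (a - 1) * (1 - s) ^ (a - 1)) := by
        rw [betaCDF, intervalIntegral.integral_of_le (by simp), integral_const_mul, beta,
          one_div_div, ← two_mul, sq]
    _ = ∫ s in Iic t, betaPDFReal a a s := by
        rw [hpdf, setIntegral_indicator measurableSet_Ioo, ← hclip]
        exact setIntegral_congr_set (ae_eq_set_inter (ae_eq_refl _) Ioo_ae_eq_Ioc.symm)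
    _ = cdf (betaMeasure a a) t := by
        rw [cdf_eq_real, betaMeasure, measureReal_def, withDensity_apply _ measurableSet_Iic]
        exact integral_eq_lintegral_of_nonneg_ae hnonneg (by fun_prop)

lemma ofReal_integral_cdf_comp {Ω : Type*} [MeasurableSpace Ω] {P : Measure Ω} [IsFiniteMeasure P]
    {μ : Measure ℝ} [IsProbabilityMeasure μ] {f : Ω → ℝ} (hf : Measurable f) :
    ENNReal.ofReal (∫ ω, cdf μ (f ω) ∂P) = ∫⁻ ω, μ (Iic (f ω)) ∂P := by
  have hint : Integrable (fun ω ↦ cdf μ (f ω)) P :=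
    .of_bound ((monotone_cdf μ).measurable.comp hf).aestronglyMeasurable 1
      (.of_forall fun ω ↦ by
        rw [Real.norm_of_nonneg (cdf_nonneg _ _)]
        exact cdf_le_one _ _)
  rw [ofReal_integral_eq_lintegral_ofReal hint (.of_forall fun _ ↦ cdf_nonneg _ _)]
  simp_rw [ofReal_cdf]

lemma measurable_measure_Iic (μ : Measure ℝ) : Measurable fun t ↦ μ (Iic t) :=
  Monotone.measurable fun _ _ h ↦ measure_mono (Iic_subset_Iic.2 h)

lemma lintegral_fun_norm_addHaar {E : Type*} [NormedAddCommGroup E] [NormedSpace ℝ E]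
    [Nontrivial E] [FiniteDimensional ℝ E] [MeasurableSpace E] [BorelSpace E]
    (μ : Measure E) [μ.IsAddHaarMeasure] {f : ℝ → ℝ≥0∞} (hf : Measurable f) :
    ∫⁻ x, f ‖x‖ ∂μ = finrank ℝ E * μ (Metric.ball 0 1) *
      ∫⁻ r in Ioi 0, ENNReal.ofReal (r ^ (finrank ℝ E - 1)) * f r :=
  calc ∫⁻ x, f ‖x‖ ∂μ
      = ∫⁻ x : ({0}ᶜ : Set E), f ‖(x : E)‖ ∂μ.comap (↑) := by
        rw [lintegral_subtype_comap (measurableSet_singleton _).compl (f ‖·‖),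
          restrict_compl_singleton]
    _ = ∫⁻ p, f p.2 ∂μ.toSphere.prod (.volumeIoiPow (finrank ℝ E - 1)) := by
        rw [← μ.measurePreserving_homeomorphUnitSphereProd.lintegral_comp (by fun_prop)]
        simp
    _ = μ.toSphere univ * ∫⁻ r : Ioi (0 : ℝ), f r ∂.volumeIoiPow (finrank ℝ E - 1) := by
        rw [lintegral_prod _ (by fun_prop)]
        simp [mul_comm]
    _ = _ := by
        rw [μ.toSphere_apply_univ, Measure.volumeIoiPow,
          lintegral_withDensity_eq_lintegral_mul _ (by fun_prop) (by fun_prop)]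
        congr 1
        exact lintegral_subtype_comap measurableSet_Ioi
          fun r ↦ ENNReal.ofReal (r ^ (finrank ℝ E - 1)) * f r

lemma image_sqrt_sq_add_sq_Ioi (x : ℝ) : (fun s ↦ √(x ^ 2 + s ^ 2)) '' Ioi 0 = Ioi |x| := by
  ext r
  constructor
  · rintro ⟨s, hs, rfl⟩
    exact Real.lt_sqrt_of_sq_lt (by rw [sq_abs]; linarith [sq_pos_of_pos (mem_Ioi.1 hs)])
  · intro hr
    have hr0 : 0 < r := (abs_nonneg x).trans_lt hr
    have hsq : 0 < r ^ 2 - x ^ 2 := sub_pos.2 (sq_lt_sq.2 (by rwa [abs_of_pos hr0]))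
    exact ⟨√(r ^ 2 - x ^ 2), Real.sqrt_pos.2 hsq, by
      simp [Real.sq_sqrt hsq.le, Real.sqrt_sq hr0.le]⟩

lemma lintegral_Ioi_rpow_mul_sqrt_sq_add_sq (x a : ℝ) (f : ℝ → ℝ≥0∞) :
    ∫⁻ s in Ioi 0, ENNReal.ofReal (s ^ (2 * a - 1)) * f √(x ^ 2 + s ^ 2) =
      ∫⁻ r in Ioi |x|, ENNReal.ofReal (r * (r ^ 2 - x ^ 2) ^ (a - 1)) * f r := by
  have hpos (s : ℝ) (hs : s ∈ Ioi 0) : 0 < x ^ 2 + s ^ 2 := by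
    have : 0 < s := hs
    positivity
  have hderiv (s : ℝ) (hs : s ∈ Ioi 0) :
      HasDerivWithinAt (fun s ↦ √(x ^ 2 + s ^ 2)) (s / √(x ^ 2 + s ^ 2)) (Ioi 0) s := by
    refine ((((hasDerivAt_pow 2 s).const_add (x ^ 2)).sqrt (hpos s hs).ne').congr_deriv
      ?_).hasDerivWithinAt
    simp [mul_div_mul_left]
  have hinj : InjOn (fun s ↦ √(x ^ 2 + s ^ 2)) (Ioi 0) := fun s hs t ht hst ↦ by
    have hsq := (Real.sqrt_inj (hpos s hs).le (hpos t ht).le).1 hst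
    exact (sq_eq_sq₀ (mem_Ioi.1 hs).le (mem_Ioi.1 ht).le).1 (add_left_cancel hsq)
  rw [← image_sqrt_sq_add_sq_Ioi,
    lintegral_image_eq_lintegral_abs_deriv_mul measurableSet_Ioi hderiv hinj]
  refine setLIntegral_congr_fun measurableSet_Ioi fun s hs ↦ ?_
  have hs0 : 0 < s := hs
  have hr := Real.sqrt_pos.2 (hpos s hs)
  rw [← mul_assoc, ← ENNReal.ofReal_mul (abs_nonneg _), abs_of_pos (by positivity)]
  congr 2
  rw [Real.sq_sqrt (hpos s hs).le, add_sub_cancel_left, ← Real.rpow_natCast_mul hs0.le,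
    ← mul_assoc, div_mul_cancel₀ _ hr.ne', mul_comm s, ← Real.rpow_add_one hs0.ne']
  congr 1
  push_cast
  ring

lemma lintegral_lintegral_Ioi_abs {H : ℝ → ℝ → ℝ≥0∞} (hH : Measurable (Function.uncurry H)) :
    ∫⁻ x, ∫⁻ r in Ioi |x|, H x r = ∫⁻ r in Ioi 0, ∫⁻ x in Ioo (-r) r, H x r := by
  have hcone : MeasurableSet {p : ℝ × ℝ | |p.1| < p.2} :=
    measurableSet_lt (by fun_prop) measurable_snd
  calc ∫⁻ x, ∫⁻ r in Ioi |x|, H x r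
      = ∫⁻ x, ∫⁻ r, {p : ℝ × ℝ | |p.1| < p.2}.indicator (Function.uncurry H) (x, r) := by
        simp_rw [← lintegral_indicator measurableSet_Ioi]
        rfl
    _ = ∫⁻ r, ∫⁻ x, {p : ℝ × ℝ | |p.1| < p.2}.indicator (Function.uncurry H) (x, r) :=
        lintegral_lintegral_swap (hH.indicator hcone).aemeasurable
    _ = ∫⁻ r, ∫⁻ x in Ioo (-r) r, H x r := by
        simp_rw [← lintegral_indicator measurableSet_Ioo]
        simp [indicator, abs_lt]
    _ = ∫⁻ r in Ioi 0, ∫⁻ x in Ioo (-r) r, H x r := by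
        refine (setLIntegral_eq_of_support_subset fun r hr ↦ ?_).symm
        contrapose! hr
        simp only [mem_Ioi, not_lt] at hr
        simp [Ioo_eq_empty_of_le (show r ≤ -r by linarith)]

lemma lintegral_Ioo_rpow_sq_sub_sq {a r : ℝ} (ha : 0 < a) (hr : 0 < r) {f : ℝ → ℝ≥0∞}
    (hf : Measurable f) :
    ∫⁻ x in Ioo (-r) r, ENNReal.ofReal ((r ^ 2 - x ^ 2) ^ (a - 1)) * f x =
      ENNReal.ofReal ((2 * r) ^ (2 * a - 1) * beta a a) *
        ∫⁻ t, f (r * (2 * t - 1)) ∂betaMeasure a a := by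
  have himage : (fun t ↦ r * (2 * t - 1)) '' Ioo 0 1 = Ioo (-r) r := by
    convert! image_affine_Ioo (show 0 < 2 * r by positivity) (-r) 0 1 using 2 <;> ring
  have hderiv (t : ℝ) (_ : t ∈ Ioo 0 1) :
      HasDerivWithinAt (fun t ↦ r * (2 * t - 1)) (2 * r) (Ioo 0 1) t :=
    (((((hasDerivAt_id t).const_mul 2).sub_const 1).const_mul r).congr_deriv
      (by ring)).hasDerivWithinAt
  have hinj : InjOn (fun t ↦ r * (2 * t - 1)) (Ioo 0 1) := fun s _ t _ hst ↦ by
    linarith [mul_left_cancel₀ hr.ne' hst]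
  have hbeta := beta_pos ha ha
  rw [lintegral_betaMeasure a a (by fun_prop), ← lintegral_const_mul' _ _ ENNReal.ofReal_ne_top,
    ← himage, lintegral_image_eq_lintegral_abs_deriv_mul measurableSet_Ioo hderiv hinj]
  refine setLIntegral_congr_fun measurableSet_Ioo fun t ht ↦ ?_
  have ht1 : 0 < 1 - t := sub_pos.2 ht.2
  rw [← mul_assoc, ← mul_assoc, ← ENNReal.ofReal_mul (abs_nonneg _),
    ← ENNReal.ofReal_mul (by positivity), abs_of_pos (by positivity)]
  congr 2
  have hfactor : r ^ 2 - (r * (2 * t - 1)) ^ 2 = (2 * r) ^ 2 * (t * (1 - t)) := by ring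
  have hexp : 2 * a - 1 = 2 * (a - 1) + 1 := by ring
  rw [hfactor, Real.mul_rpow (by positivity) (mul_pos ht.1 ht1).le,
    Real.mul_rpow ht.1.le ht1.le, ← Real.rpow_natCast_mul (by positivity), Nat.cast_ofNat,
    hexp, Real.rpow_add_one (by positivity)]
  field_simp

lemma lintegral_halfPlane_eq_lintegral_betaMeasure {a : ℝ} (ha : 0 < a) {F : ℝ × ℝ → ℝ≥0∞}
    (hF : Measurable F) :
    ∫⁻ x, ∫⁻ s in Ioi 0, ENNReal.ofReal (s ^ (2 * a - 1)) * F (x, √(x ^ 2 + s ^ 2)) =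
      ∫⁻ r in Ioi 0, ENNReal.ofReal (r * ((2 * r) ^ (2 * a - 1) * beta a a)) *
        ∫⁻ t, F (r * (2 * t - 1), r) ∂betaMeasure a a := by
  have hradius (x : ℝ) := lintegral_Ioi_rpow_mul_sqrt_sq_add_sq x a fun r ↦ F (x, r)
  simp_rw [hradius]
  rw [lintegral_lintegral_Ioi_abs (by fun_prop)]
  refine setLIntegral_congr_fun measurableSet_Ioi fun r hr ↦ ?_
  have hr0 : 0 < r := hr
  simp_rw [ENNReal.ofReal_mul hr0.le, mul_assoc]
  rw [lintegral_const_mul _ (by fun_prop),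
    lintegral_Ioo_rpow_sq_sub_sq ha hr0 (f := fun x ↦ F (x, r)) (by fun_prop)]

/-- The value of `(1 + cos θ) / 2` at which a vector of norm `r` making an angle `θ` with a vector
of norm `ρ` has a sum of norm `T` with it. Its junk value at `ρ * r = 0` is `0`. -/
noncomputable def capThreshold (T ρ r : ℝ) : ℝ := (T ^ 2 - (r - ρ) ^ 2) / (4 * ρ * r)

@[fun_prop]
lemma measurable_capThreshold (T ρ : ℝ) : Measurable (capThreshold T ρ) := by
  unfold capThreshold
  fun_prop

lemma le_capThreshold_iff {T ρ r t : ℝ} (hρ : 0 < ρ) (hr : 0 < r) :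
    t ≤ capThreshold T ρ r ↔ ρ ^ 2 + 2 * ρ * (r * (2 * t - 1)) + r ^ 2 ≤ T ^ 2 := by
  rw [capThreshold, le_div_iff₀ (by positivity)]
  constructor <;> intro h <;> linarith

lemma norm_add_le_iff_inner_normalize {E : Type*} [NormedAddCommGroup E] [InnerProductSpace ℝ E]
    {δ : E} (hδ : δ ≠ 0) {T : ℝ} (hT : 0 ≤ T) (z : E) :
    ‖δ + z‖ ≤ T ↔ ‖δ‖ ^ 2 + 2 * ‖δ‖ * ⟪‖δ‖⁻¹ • δ, z⟫ + ‖z‖ ^ 2 ≤ T ^ 2 := by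
  rw [← sq_le_sq₀ (norm_nonneg _) hT, norm_add_sq_real, real_inner_smul_left, mul_assoc,
    mul_inv_cancel_left₀ (norm_ne_zero_iff.2 hδ)]

section Slice

variable {E : Type*} [NormedAddCommGroup E] [InnerProductSpace ℝ E] [FiniteDimensional ℝ E]
  [MeasurableSpace E] [BorelSpace E] {e : E}

lemma measurePreserving_smul_add_orthogonal (he : ‖e‖ = 1) :
    MeasurePreserving fun p : ℝ × (ℝ ∙ e)ᗮ ↦ p.1 • e + p.2 := by
  have hline := (LinearIsometryEquiv.toSpanUnitSingleton e he).measurePreserving.prod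
    (.id (volume : Measure (ℝ ∙ e)ᗮ))
  have hsplit := (ℝ ∙ e).orthogonalDecomposition.symm.measurePreserving.comp
    (WithLp.volume_preserving_toLp (ℝ ∙ e) (ℝ ∙ e)ᗮ)
  convert! hsplit.comp hline using 2

lemma lintegral_inner_norm_eq_lintegral_orthogonal (he : ‖e‖ = 1) {F : ℝ × ℝ → ℝ≥0∞}
    (hF : Measurable F) :
    ∫⁻ z : E, F (⟪e, z⟫, ‖z‖) =
      ∫⁻ x : ℝ, ∫⁻ y : (ℝ ∙ e)ᗮ, F (x, √(x ^ 2 + ‖y‖ ^ 2)) := by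
  rw [← (measurePreserving_smul_add_orthogonal he).lintegral_comp (by fun_prop),
    Measure.volume_eq_prod, lintegral_prod _ (by fun_prop)]
  refine lintegral_congr fun x ↦ lintegral_congr fun y ↦ ?_
  have hxy : ⟪x • e, (y : E)⟫ = 0 := by
    rw [real_inner_smul_left, Submodule.mem_orthogonal_singleton_iff_inner_right.1 y.2, mul_zero]
  have hnorm : ‖x • e + y‖ = √(x ^ 2 + ‖y‖ ^ 2) := by
    rw [norm_add_eq_sqrt_iff_real_inner_eq_zero.2 hxy, norm_smul, he]
    simp [← sq]
  have hinner : ⟪e, x • e + y⟫ = x := by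
    rw [inner_add_right, Submodule.mem_orthogonal_singleton_iff_inner_right.1 y.2]
    simp [inner_smul_right, he]
  simp only [hnorm, hinner, Submodule.coe_norm]

lemma lintegral_inner_norm_eq_lintegral_radius (he : ‖e‖ = 1) {a : ℝ} (ha : 0 < a)
    (hE : finrank ℝ E = 2 * a + 1) {F : ℝ × ℝ → ℝ≥0∞} (hF : Measurable F) :
    ∫⁻ z : E, F (⟪e, z⟫, ‖z‖) =
      finrank ℝ (ℝ ∙ e)ᗮ * volume (Metric.ball (0 : (ℝ ∙ e)ᗮ) 1) *
        ∫⁻ r in Ioi 0, ENNReal.ofReal (r * ((2 * r) ^ (2 * a - 1) * beta a a)) *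
          ∫⁻ t, F (r * (2 * t - 1), r) ∂betaMeasure a a := by
  have he0 : e ≠ 0 := norm_ne_zero_iff.1 (he ▸ one_ne_zero)
  have hrank : (finrank ℝ (ℝ ∙ e)ᗮ : ℝ) = 2 * a := by
    rw [← (ℝ ∙ e).finrank_add_finrank_orthogonal, finrank_span_singleton he0] at hE
    push_cast at hE
    linarith
  have hrank_pos : 0 < finrank ℝ (ℝ ∙ e)ᗮ := by
    rw [← Nat.cast_pos (α := ℝ), hrank]
    positivity
  have : Nontrivial (ℝ ∙ e)ᗮ := finrank_pos_iff.1 hrank_pos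
  have hpow (s : ℝ) : s ^ (finrank ℝ (ℝ ∙ e)ᗮ - 1) = s ^ (2 * a - 1) := by
    rw [← Real.rpow_natCast, Nat.cast_pred hrank_pos, hrank]
  have hslice (x : ℝ) := lintegral_fun_norm_addHaar (volume : Measure (ℝ ∙ e)ᗮ)
    (f := fun s ↦ F (x, √(x ^ 2 + s ^ 2))) (by fun_prop)
  simp_rw [lintegral_inner_norm_eq_lintegral_orthogonal he hF, hslice, hpow]
  rw [lintegral_const_mul _ (by fun_prop), lintegral_halfPlane_eq_lintegral_betaMeasure ha hF]

lemma lintegral_inner_norm_eq_lintegral_betaMeasure (he : ‖e‖ = 1) {a : ℝ} (ha : 0 < a)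
    (hE : finrank ℝ E = 2 * a + 1) {F : ℝ × ℝ → ℝ≥0∞} (hF : Measurable F) :
    ∫⁻ z : E, F (⟪e, z⟫, ‖z‖) =
      ∫⁻ z : E, ∫⁻ t, F (‖z‖ * (2 * t - 1), ‖z‖) ∂betaMeasure a a := by
  have := isProbabilityMeasureBeta ha ha
  have hmean : Measurable fun p : ℝ × ℝ ↦ ∫⁻ t, F (p.2 * (2 * t - 1), p.2) ∂betaMeasure a a := by
    fun_prop
  rw [lintegral_inner_norm_eq_lintegral_radius he ha hE hF,
    lintegral_inner_norm_eq_lintegral_radius he ha hE hmean]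
  simp

lemma withDensity_norm_setOf_norm_add_le {a : ℝ} (ha : 0 < a) (hE : finrank ℝ E = 2 * a + 1)
    {g : ℝ → ℝ≥0∞} (hg : Measurable g) {δ : E} (hδ : δ ≠ 0) {T : ℝ} (hT : 0 ≤ T) :
    (volume.withDensity fun z : E ↦ g ‖z‖) {z | ‖δ + z‖ ≤ T} =
      ∫⁻ z, betaMeasure a a (Iic (capThreshold T ‖δ‖ ‖z‖))
        ∂volume.withDensity fun z : E ↦ g ‖z‖ := by
  have hρ : 0 < ‖δ‖ := norm_pos_iff.2 hδ
  have he : ‖‖δ‖⁻¹ • δ‖ = 1 := norm_smul_inv_norm hδ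
  let S : Set (ℝ × ℝ) := {p | ‖δ‖ ^ 2 + 2 * ‖δ‖ * p.1 + p.2 ^ 2 ≤ T ^ 2}
  have hS : MeasurableSet S := measurableSet_le (by fun_prop) measurable_const
  have hcap : Measurable fun z : E ↦ betaMeasure a a (Iic (capThreshold T ‖δ‖ ‖z‖)) :=
    (measurable_measure_Iic _).comp (by fun_prop)
  calc (volume.withDensity fun z : E ↦ g ‖z‖) {z | ‖δ + z‖ ≤ T}
      = ∫⁻ z : E, S.indicator (fun p ↦ g p.2) (⟪‖δ‖⁻¹ • δ, z⟫, ‖z‖) := by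
        have hball : MeasurableSet {z | ‖δ + z‖ ≤ T} :=
          measurableSet_le (by fun_prop) measurable_const
        rw [withDensity_apply _ hball, ← lintegral_indicator hball]
        simp only [indicator, mem_ofPred_eq, norm_add_le_iff_inner_normalize hδ hT, S]
    _ = ∫⁻ z : E, ∫⁻ t, S.indicator (fun p ↦ g p.2) (‖z‖ * (2 * t - 1), ‖z‖) ∂betaMeasure a a :=
        lintegral_inner_norm_eq_lintegral_betaMeasure he ha hE (by fun_prop)
    _ = ∫⁻ z : E, g ‖z‖ * betaMeasure a a (Iic (capThreshold T ‖δ‖ ‖z‖)) := by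
        have : Nontrivial E := ⟨δ, 0, hδ⟩
        refine lintegral_congr_ae ?_
        filter_upwards [Measure.ae_ne volume (0 : E)] with z hz
        rw [← setLIntegral_const, ← lintegral_indicator measurableSet_Iic]
        simp only [indicator, mem_Iic, le_capThreshold_iff hρ (norm_pos_iff.2 hz), S, mem_ofPred_eq]
    _ = _ := by
        rw [lintegral_withDensity_eq_lintegral_mul _ (by fun_prop) hcap]
        rfl

end Slice

lemma lintegral_Ioi_eq_lintegral_div_rpow_div {η σ c : ℝ} (hη : 0 < η) (hσ : 0 < σ) (hc : 0 < c)
    (f : ℝ → ℝ≥0∞) :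
    ∫⁻ u in Ioi 0, f u =
      ∫⁻ r in Ioi 0, ENNReal.ofReal (η / (c * σ) * (r / σ) ^ (η - 1)) * f ((r / σ) ^ η / c) := by
  have himage : (fun r ↦ (r / σ) ^ η / c) '' Ioi 0 = Ioi 0 := by
    ext u
    constructor
    · rintro ⟨r, hr, rfl⟩
      have : 0 < r := hr
      exact mem_Ioi.2 (by positivity)
    · intro hu
      have hcu : 0 < c * u := mul_pos hc hu
      refine ⟨σ * (c * u) ^ (1 / η), mem_Ioi.2 (by positivity), ?_⟩
      dsimp only
      rw [mul_div_cancel_left₀ _ hσ.ne', ← Real.rpow_mul hcu.le, one_div_mul_cancel hη.ne',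
        Real.rpow_one, mul_div_cancel_left₀ _ hc.ne']
  have hderiv (r : ℝ) (hr : r ∈ Ioi 0) : HasDerivWithinAt (fun r ↦ (r / σ) ^ η / c)
      (η / (c * σ) * (r / σ) ^ (η - 1)) (Ioi 0) r := by
    have hr0 : 0 < r := hr
    refine (((((hasDerivAt_id r).div_const σ).rpow_const (p := η)
      (.inl (div_pos hr0 hσ).ne')).div_const c).congr_deriv ?_).hasDerivWithinAt
    simp only [id]
    field_simp
  have hinj : InjOn (fun r ↦ (r / σ) ^ η / c) (Ioi 0) := fun r hr s hs hrs ↦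
    (div_left_inj' hσ.ne').1 <| Real.rpow_left_injOn hη.ne' (div_pos hr hσ).le (div_pos hs hσ).le <|
      (div_left_inj' hc.ne').1 hrs
  nth_rw 1 [← himage]
  rw [lintegral_image_eq_lintegral_abs_deriv_mul measurableSet_Ioi hderiv hinj]
  refine setLIntegral_congr_fun measurableSet_Ioi fun r hr ↦ ?_
  have : 0 < r := hr
  rw [abs_of_pos (by positivity)]

lemma lintegral_gammaMeasure_comp_rpow (α : ℝ) {η σ c : ℝ} (hη : 0 < η) (hσ : 0 < σ) (hc : 0 < c)
    {f : ℝ → ℝ≥0∞} (hf : Measurable f) :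
    ∫⁻ u, f (σ * (c * u) ^ (1 / η)) ∂gammaMeasure α 1 =
      ∫⁻ r in Ioi 0, ENNReal.ofReal (η / σ * c ^ (-α) / Real.Gamma α *
        (r / σ) ^ (α * η - 1) * Real.exp (-((r / σ) ^ η / c))) * f r := by
  rw [lintegral_gammaMeasure _ _ (by fun_prop),
    lintegral_Ioi_eq_lintegral_div_rpow_div hη hσ hc]
  refine setLIntegral_congr_fun measurableSet_Ioi fun r hr ↦ ?_
  have hr0 : 0 < r := hr
  have hq : 0 < r / σ := div_pos hr0 hσ
  have hinv : σ * (c * ((r / σ) ^ η / c)) ^ (1 / η) = r := by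
    rw [mul_div_cancel₀ _ hc.ne', ← Real.rpow_mul hq.le, mul_one_div_cancel hη.ne',
      Real.rpow_one, mul_div_cancel₀ _ hσ.ne']
  have hexp : α * η - 1 = η * (α - 1) + (η - 1) := by ring
  rw [hinv, ← mul_assoc, gammaPDF_of_nonneg (by positivity), ← ENNReal.ofReal_mul (by positivity)]
  congr 2
  rw [Real.div_rpow (by positivity) hc.le, ← Real.rpow_mul hq.le, hexp, Real.rpow_add hq,
    Real.rpow_neg hc.le, Real.rpow_sub_one hc.ne']
  simp only [Real.one_rpow, one_mul]
  field_simp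

lemma finrank_mul_volume_ball_zero_one (E : Type*) [NormedAddCommGroup E] [InnerProductSpace ℝ E]
    [FiniteDimensional ℝ E] [Nontrivial E] [MeasurableSpace E] [BorelSpace E] :
    finrank ℝ E * volume (Metric.ball (0 : E) 1) =
      ENNReal.ofReal (2 * Real.pi ^ (finrank ℝ E / 2 : ℝ) / Real.Gamma (finrank ℝ E / 2)) := by
  have hpos : (0 : ℝ) < finrank ℝ E := by exact_mod_cast finrank_pos
  rw [InnerProductSpace.volume_ball, ENNReal.ofReal_one, one_pow, one_mul,
    ← ENNReal.ofReal_natCast, ← ENNReal.ofReal_mul hpos.le, Real.Gamma_add_one (by positivity),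
    Real.sqrt_eq_rpow, ← Real.rpow_mul_natCast Real.pi_pos.le]
  congr 1
  field_simp

/-- The density `eggPDF` as a function of the radius `r = ‖x‖`. -/
noncomputable def eggProfile (d k : ℕ) (η σ r : ℝ) : ℝ :=
  (η / 2) * (2 * σ ^ η) ^ (-((d - 2 * k) / η)) * Real.pi ^ (-(d : ℝ) / 2) *
    (Real.Gamma (d / 2) / Real.Gamma ((d - 2 * k) / η)) *
    r ^ (-(2 * (k : ℝ))) * Real.exp (-(1 / 2) * (r / σ) ^ η)

lemma eggPDF_eq_eggProfile_norm (d k : ℕ) (η σ : ℝ) (x : EuclideanSpace ℝ (Fin d)) :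
    eggPDF d k η σ x = eggProfile d k η σ ‖x‖ := rfl

@[fun_prop]
lemma measurable_eggProfile (d k : ℕ) (η σ : ℝ) : Measurable (eggProfile d k η σ) := by
  unfold eggProfile
  fun_prop

lemma sphere_area_mul_eggProfile {d : ℕ} (hd : d ≠ 0) (k : ℕ) {η σ r : ℝ} (hη : 0 < η)
    (hσ : 0 < σ) (hr : 0 < r) :
    2 * Real.pi ^ (d / 2 : ℝ) / Real.Gamma (d / 2) * (r ^ (d - 1) * eggProfile d k η σ r) =
      η / σ * 2 ^ (-((d - 2 * k) / η)) / Real.Gamma ((d - 2 * k) / η) *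
        (r / σ) ^ ((d - 2 * k) / η * η - 1) * Real.exp (-((r / σ) ^ η / 2)) := by
  have hΓ : Real.Gamma (d / 2) ≠ 0 := (Real.Gamma_pos_of_pos (by positivity)).ne'
  have hpi : Real.pi ^ (d / 2 : ℝ) * Real.pi ^ (-(d : ℝ) / 2) = 1 := by
    rw [← Real.rpow_add Real.pi_pos, neg_div, add_neg_cancel, Real.rpow_zero]
  have hscale : (2 * σ ^ η) ^ (-((d - 2 * k) / η)) =
      2 ^ (-((d - 2 * k) / η)) * (σ ^ (d - 2 * k : ℝ))⁻¹ := by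
    rw [Real.mul_rpow two_pos.le (by positivity), ← Real.rpow_mul hσ.le, mul_neg,
      mul_div_cancel₀ _ hη.ne', Real.rpow_neg hσ.le]
  have hradius : r ^ (d - 1) * r ^ (-(2 * (k : ℝ))) = r ^ (d - 2 * k : ℝ) / r := by
    rw [← Real.rpow_natCast, ← Real.rpow_add hr, ← Real.rpow_sub_one hr.ne',
      Nat.cast_pred (Nat.pos_of_ne_zero hd)]
    ring_nf
  have hexp : -(1 / 2) * (r / σ) ^ η = -((r / σ) ^ η / 2) := by ring
  calc 2 * Real.pi ^ (d / 2 : ℝ) / Real.Gamma (d / 2) * (r ^ (d - 1) * eggProfile d k η σ r)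
      = η * 2 ^ (-((d - 2 * k) / η)) * (σ ^ (d - 2 * k : ℝ))⁻¹ / Real.Gamma ((d - 2 * k) / η) *
          (Real.pi ^ (d / 2 : ℝ) * Real.pi ^ (-(d : ℝ) / 2)) *
          (r ^ (d - 1) * r ^ (-(2 * (k : ℝ)))) * Real.exp (-((r / σ) ^ η / 2)) := by
        rw [eggProfile, hscale, hexp]
        field_simp
    _ = _ := by
        rw [hpi, hradius, div_mul_cancel₀ _ hη.ne', Real.rpow_sub_one (div_pos hr hσ).ne',
          Real.div_rpow hr.le hσ.le (d - 2 * k)]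
        field_simp

lemma lintegral_norm_withDensity_eggPDF {d : ℕ} (hd : d ≠ 0) (k : ℕ) {η σ : ℝ} (hη : 0 < η)
    (hσ : 0 < σ) {f : ℝ → ℝ≥0∞} (hf : Measurable f) :
    ∫⁻ x, f ‖x‖ ∂volume.withDensity (fun x ↦ ENNReal.ofReal (eggPDF d k η σ x)) =
      ∫⁻ u, f (σ * (2 * u) ^ (1 / η)) ∂gammaMeasure ((d - 2 * k) / η) 1 := by
  have : NeZero d := ⟨hd⟩
  have : Nontrivial (EuclideanSpace ℝ (Fin d)) := inferInstance
  simp_rw [eggPDF_eq_eggProfile_norm]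
  rw [lintegral_withDensity_eq_lintegral_mul _ (by fun_prop) (by fun_prop)]
  simp only [Pi.mul_apply]
  rw [lintegral_fun_norm_addHaar volume (f := fun r ↦ ENNReal.ofReal (eggProfile d k η σ r) * f r)
    (by fun_prop), finrank_mul_volume_ball_zero_one, finrank_euclideanSpace_fin,
    lintegral_gammaMeasure_comp_rpow _ hη hσ two_pos hf,
    ← lintegral_const_mul' _ _ ENNReal.ofReal_ne_top]
  refine setLIntegral_congr_fun measurableSet_Ioi fun r hr ↦ ?_
  have hr0 : 0 < r := hr
  rw [← mul_assoc (ENNReal.ofReal (r ^ (d - 1))), ← mul_assoc,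
    ← ENNReal.ofReal_mul (by positivity), ← ENNReal.ofReal_mul (by positivity),
    sphere_area_mul_eggProfile hd k hη hσ hr0]

theorem egg_expectation_formula_general {d k : ℕ} (hd : 2 ≤ d) (hdk : 2 * k < d) {η σ T : ℝ}
    (hη : 0 < η) (hσ : 0 < σ) (hT : 0 ≤ T) {δ : EuclideanSpace ℝ (Fin d)} (hδ : δ ≠ 0) :
    (volume.withDensity fun x ↦ ENNReal.ofReal (eggPDF d k η σ x)) {z | ‖δ + z‖ ≤ T} =
      ENNReal.ofReal (∫ u, betaCDF ((d - 1) / 2)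
        (capThreshold T ‖δ‖ (σ * (2 * u) ^ (1 / η))) ∂gammaMeasure ((d - 2 * k) / η) 1) := by
  have hd1 : (1 : ℝ) < d := by exact_mod_cast hd
  have hdk0 : (0 : ℝ) < d - 2 * k := sub_pos.2 (by exact_mod_cast hdk)
  have ha : 0 < ((d : ℝ) - 1) / 2 := by linarith
  have := isProbabilityMeasureBeta ha ha
  have := isProbabilityMeasure_gammaMeasure (div_pos hdk0 hη) one_pos
  rw [betaCDF_eq_cdf ha, ofReal_integral_cdf_comp (by fun_prop),
    ← lintegral_norm_withDensity_eggPDF (by omega) k hη hσ (f := fun r ↦ betaMeasure _ _ (Iic _))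
      ((measurable_measure_Iic _).comp (measurable_capThreshold T ‖δ‖))]
  simp_rw [eggPDF_eq_eggProfile_norm]
  exact withDensity_norm_setOf_norm_add_le ha (by rw [finrank_euclideanSpace_fin]; ring)
    (measurable_eggProfile d k η σ).ennreal_ofReal hδ hT

end

/-- For `P = G(σ,η,k)` the EGG distribution on `ℝ^d`, `f* = 1{‖t‖ ≤ T}`, and `δ = (ρ,0,…,0)`:
`E_{z~P}[f*(δ+z)] = E_{u~Γ((d-2k)/η,1)} Ψ_{(d-1)/2}((T² - (σ_g(2u)^{1/η}-ρ)²)/(4ρσ_g(2u)^{1/η}))`. -/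
theorem egg_expectation_formula (d k : ℕ) (hd : 2 ≤ d) (hdk : 2 * k + 1 ≤ d)
    (η σg ρ T : ℝ) (hη : 0 < η) (hσg : 0 < σg) (hρ : 0 < ρ) (hT : 0 < T)
    (μP : Measure (EuclideanSpace ℝ (Fin d)))
    (hμP : μP = volume.withDensity fun x => ENNReal.ofReal (eggPDF d k η σg x))
    (δ : EuclideanSpace ℝ (Fin d))
    (hδ : δ = ρ • EuclideanSpace.single (⟨0, by omega⟩ : Fin d) (1 : ℝ)) :
    μP {z : EuclideanSpace ℝ (Fin d) | ‖δ + z‖ ≤ T} =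
      ENNReal.ofReal (∫ u,
        betaCDF (((d : ℝ) - 1) / 2)
          ((T ^ 2 - (σg * (2 * u) ^ ((1 : ℝ) / η) - ρ) ^ 2) /
            (4 * ρ * (σg * (2 * u) ^ ((1 : ℝ) / η))))
        ∂(gammaMeasure (((d : ℝ) - 2 * k) / η) 1)) := by
  have hnorm : ‖δ‖ = ρ := by simp [hδ, norm_smul, abs_of_pos hρ]
  subst hμP hnorm
  exact egg_expectation_formula_general hd hdk hη hσg hT.le (norm_pos_iff.1 hρ)
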